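/- arXiv:2506.01651 — 2 statements merged into one kernel-verified Lean document; each statement's English description precedes it below -/
import Mathlib

section
/- Let n ≥ 1, and let v : ℤ/nℤ → ℤ² and b : ℤ/nℤ → ℤ satisfy: (i) v(0) and v(1) are linearly independent (equivalently, the 2×2 matrix with columns v(0), v(1) has nonzero determinant), and (ii) v(i+1) = b(i)·v(i) − v(i−1) for every i ∈ ℤ/nℤ. Then the ordered product M(b(0))·M(b(n−1))·M(b(n−2))⋯M(b(2))·M(b(1)) is the 2×2 identity matrix. -/
/-!
The recurrence says exactly that `M(b i)` carries the frame `(v i, -v (i-1))` to the next frame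
`(v (i+1), -v i)`. Going once around the cycle, the ordered product of the `M(b i)` fixes the
initial frame, and a matrix fixing a linearly independent family is the identity.
-/

open Matrix

/-- The transition matrix `M(b) = !![b, 1; -1, 0]` of the integral affine structure. -/
def M (b : ℤ) : Matrix (Fin 2) (Fin 2) ℤ := !![b, 1; -1, 0]

lemma prod_map_range_sub_smul {G α : Type*} [Monoid G] [MulAction G α] (g : ℕ → G) (x : ℕ → α)
    (hx : ∀ k, g (k + 1) • x k = x (k + 1)) (n : ℕ) :
    ((List.range n).map fun j => g (n - j)).prod • x 0 = x n := by
  induction n with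
  | zero => simp
  | succ n ih =>
    simp only [List.prod_range_succ', Nat.sub_zero, Nat.succ_sub_succ, mul_smul, ih, hx]

section MatrixAction

open scoped Matrix.Module

variable {R V : Type*} [Ring R] [AddCommGroup V] [Module R V]

lemma matrix_smul_left_injective {ι : Type*} [Fintype ι] [DecidableEq ι] {u : ι → V}
    (hu : LinearIndependent R u) : Function.Injective fun A : Matrix ι ι R => A • u :=
  fun _ _ hAB => funext fun i => hu.fintypeLinearCombination_injective (congrFun hAB i)

/-- The transition matrix `M(b)` with its entry `b` in an arbitrary ring; over `ℤ` it is `M b` by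
definition. It lets the monodromy argument run for sequences in any module. -/
def transitionMatrix (b : R) : Matrix (Fin 2) (Fin 2) R := !![b, 1; -1, 0]

lemma transitionMatrix_smul (b : R) (x y : V) :
    transitionMatrix b • ![x, -y] = ![b • x - y, -x] := by
  ext i
  fin_cases i <;> simp [transitionMatrix, sub_eq_add_neg]

theorem stmt2_general (n : ℕ) (v : ℕ → V) (b : ℕ → R) (hindep : LinearIndependent R ![v 0, v 1])
    (hrec : ∀ k, v (k + 2) = b (k + 1) • v (k + 1) - v k)
    (hv₀ : v n = v 0) (hv₁ : v (n + 1) = v 1) :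
    ((List.range n).map fun j => transitionMatrix (b (n - j))).prod = 1 := by
  let frame (k : ℕ) : Fin 2 → V := ![v (k + 1), -v k]
  have hstep (k : ℕ) : transitionMatrix (b (k + 1)) • frame k = frame (k + 1) := by
    simp only [frame, transitionMatrix_smul, hrec]
  have hclosed : frame n = frame 0 := by simp only [frame, hv₀, hv₁, zero_add]
  have hframe : LinearIndependent R (frame 0) :=
    LinearIndependent.pair_neg_right_iff.mpr (LinearIndependent.pair_symm_iff.mp hindep)
  apply matrix_smul_left_injective hframe
  calc ((List.range n).map fun j => transitionMatrix (b (n - j))).prod • frame 0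
      = frame n := prod_map_range_sub_smul (fun k => transitionMatrix (b k)) frame hstep n
    _ = (1 : Matrix (Fin 2) (Fin 2) R) • frame 0 := by rw [hclosed, one_smul]

end MatrixAction

lemma linearIndependent_pair_of_det_ne_zero {R : Type*} [CommRing R] [IsDomain R]
    {x y : Fin 2 → R} (h : (!![x 0, y 0; x 1, y 1]).det ≠ 0) : LinearIndependent R ![x, y] := by
  have hcols : (!![x 0, y 0; x 1, y 1]).col = ![x, y] := by
    ext j i
    fin_cases j <;> fin_cases i <;> rfl
  exact hcols ▸ Matrix.linearIndependent_cols_of_det_ne_zero h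

/-- For a cyclic family `v : ℤ/nℤ → ℤ²` of ray generators of a complete smooth toric fan,
satisfying `v(i+1) = b(i)·v(i) - v(i-1)` with `v(0), v(1)` linearly independent, the
monodromy `M(b(0))·M(b(n-1))·⋯·M(b(1))` around the toric vertex is trivial. -/
theorem stmt2 (n : ℕ) (hn : 1 ≤ n) (v : ZMod n → Fin 2 → ℤ) (b : ZMod n → ℤ)
    (hindep : (!![v 0 0, v 1 0; v 0 1, v 1 1] : Matrix (Fin 2) (Fin 2) ℤ).det ≠ 0)
    (hrec : ∀ i : ZMod n, v (i + 1) = b i • v i - v (i - 1)) :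
    ((List.range n).map (fun j => M (b ((n - j : ℕ) : ZMod n)))).prod = 1 := by
  exact stmt2_general n (fun k => v k) (fun k => b k)
    (by simpa using linearIndependent_pair_of_det_ne_zero hindep)
    (fun k => by simpa [add_assoc, one_add_one_eq_two] using hrec (k + 1)) (by simp) (by simp)
end

section
/- Let n ≥ 1 and let V ⊆ ℝⁿ be a nonempty open connected set. Let c, c′ : ℤⁿ → ℝ ∪ {+∞} be functions, each finite at at least one index, such that for every x ∈ V the functions I ↦ c(I) + ⟨I, x⟩ and I ↦ c′(I) + ⟨I, x⟩ tend to +∞ along the cofinite filter on ℤⁿ (here ⟨I, x⟩ = Σᵢ Iᵢxᵢ). Define f(x) = inf_{I ∈ ℤⁿ} (c(I) + ⟨I, x⟩) and g(x) = inf_{I ∈ ℤⁿ} (c′(I) + ⟨I, x⟩). If f(x) + g(x) = 0 for all x ∈ V, then there exists a unique I₀ ∈ ℤⁿ such that c(I₀) is finite and f(x) = c(I₀) + ⟨I₀, x⟩ for all x ∈ V. -/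
open Filter

/-!
An affine function that is nonnegative on the closed sup-norm ball of radius `ε` around `x` and has
slope `K` takes a value of at least `ε |K i|` at `x`. If `K` is integral and that value is less than
`ε`, then `K = 0`.

Let `f` and `g` be the two infima, with `f + g = 0` on such a ball. If the terms of slopes `I` and
`J` come within `ε / 2` of `f x` and `g x`, their sum is nonnegative on the ball and less than `ε`
at `x`, so `J = -I`. Hence only one term of each infimum is nearly minimal at `x`: both infima are
attained there, by terms whose sum is constant. That constant is `0`, and then `f + g = 0` forces
both terms to attain the infima at every point.
-/

section TropicalLaurentSeries

open Topology Metric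

theorem exists_coe_of_ereal_add_eq_zero {a b : EReal} (h : a + b = 0) :
    ∃ r : ℝ, a = r ∧ b = ((-r : ℝ) : EReal) := by
  induction a <;> induction b
  case coe.coe r s =>
    have hrs : r + s = 0 := by exact_mod_cast h
    exact ⟨r, rfl, congrArg _ (eq_neg_of_add_eq_zero_right hrs)⟩
  all_goals simp at h

theorem ereal_eq_of_le_of_le_of_add_eq_zero {a b a' b' : EReal} (ha : a ≤ a') (hb : b ≤ b')
    (h : a + b = 0) (h' : a' + b' = 0) : a = a' := by
  obtain ⟨r, rfl, rfl⟩ := exists_coe_of_ereal_add_eq_zero h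
  obtain ⟨s, rfl, rfl⟩ := exists_coe_of_ereal_add_eq_zero h'
  exact ha.antisymm (EReal.coe_le_coe (neg_le_neg_iff.1 (EReal.coe_le_coe_iff.1 hb)))

theorem iInf_eq_of_forall_lt_imp_eq {κ α : Type*} [CompleteLinearOrder α] {u : κ → α} {b : α}
    {k : κ} (hk : u k < b) (h : ∀ j, u j < b → j = k) : ⨅ j, u j = u k := by
  refine (iInf_le u k).antisymm (le_iInf fun j => ?_)
  by_cases hj : u j < b
  · rw [h j hj]
  · exact hk.le.trans (not_lt.1 hj)

variable {ι : Type*} [Fintype ι] {x : ι → ℝ}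

theorem mul_abs_le_of_nonneg_on_closedBall {K : ι → ℝ} {d ε : ℝ} (hε : 0 ≤ ε)
    (h : ∀ y ∈ closedBall x ε, 0 ≤ d + K ⬝ᵥ y) (i : ι) : ε * |K i| ≤ d + K ⬝ᵥ x := by
  classical
  have shift (t : ℝ) (ht : |t| = ε) : 0 ≤ d + K ⬝ᵥ x + K i * t := by
    have hmem : x + Pi.single i t ∈ closedBall x ε := by
      simp [mem_closedBall, dist_eq_norm, Pi.norm_single, ht]
    simpa only [dotProduct_add, dotProduct_single, ← add_assoc] using h _ hmem
  have hpos := shift ε (abs_of_nonneg hε)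
  have hneg := shift (-ε) (by rw [abs_neg, abs_of_nonneg hε])
  rcases abs_cases (K i) with ⟨hK, -⟩ | ⟨hK, -⟩ <;> rw [hK] <;> linarith

/-- The tropical monomial with coefficient `a` and exponent `I`, that is, the affine function with
constant term `a` and integral slope `I`. The coefficient `⊤` encodes an absent monomial. -/
noncomputable def tropMonomial (I : ι → ℤ) (a : EReal) (x : ι → ℝ) : EReal :=
  a + ((∑ i, (I i : ℝ) * x i : ℝ) : EReal)

/-- The tropical Laurent series with coefficients `c`. For `c I = -log |c_I|` it is the function
`Val(φ)` of the Laurent series `φ = ∑ c_I z^I`. -/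
noncomputable def tropLaurent (c : (ι → ℤ) → EReal) (x : ι → ℝ) : EReal :=
  ⨅ I, tropMonomial I (c I) x

variable {V : Set (ι → ℝ)} {c c' : (ι → ℤ) → EReal}

theorem tropMonomial_coe (I : ι → ℤ) (d : ℝ) (x : ι → ℝ) :
    tropMonomial I d x = ((d + (fun i => (I i : ℝ)) ⬝ᵥ x : ℝ) : EReal) :=
  (EReal.coe_add _ _).symm

theorem tropMonomial_bot (I : ι → ℤ) (x : ι → ℝ) : tropMonomial I ⊥ x = ⊥ :=
  EReal.bot_add _

theorem tropMonomial_top (I : ι → ℤ) (x : ι → ℝ) : tropMonomial I ⊤ x = ⊤ :=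
  EReal.top_add_coe _

theorem tropMonomial_zero (a : EReal) (x : ι → ℝ) : tropMonomial 0 a x = a := by
  simp [tropMonomial]

theorem tropMonomial_add_tropMonomial (I J : ι → ℤ) (a b : EReal) (x : ι → ℝ) :
    tropMonomial I a x + tropMonomial J b x = tropMonomial (I + J) (a + b) x := by
  simp only [tropMonomial, Pi.add_apply, Int.cast_add, add_mul, Finset.sum_add_distrib,
    EReal.coe_add, add_add_add_comm]

theorem tropMonomial_add_tropMonomial_neg (I : ι → ℤ) (a b : EReal) (x : ι → ℝ) :
    tropMonomial I a x + tropMonomial (-I) b x = a + b := by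
  rw [tropMonomial_add_tropMonomial, add_neg_cancel, tropMonomial_zero]

theorem tropLaurent_le_tropMonomial (c : (ι → ℤ) → EReal) (I : ι → ℤ) (x : ι → ℝ) :
    tropLaurent c x ≤ tropMonomial I (c I) x :=
  iInf_le _ I

theorem eq_zero_of_tropMonomial_nonneg_of_lt {K : ι → ℤ} {a : EReal} {ε : ℝ} (hε : 0 < ε)
    (h : ∀ y ∈ closedBall x ε, 0 ≤ tropMonomial K a y) (hlt : tropMonomial K a x < ε) :
    K = 0 := by
  induction a with
  | bot => simpa [tropMonomial_bot] using h x (mem_closedBall_self hε.le)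
  | top => simp [tropMonomial_top] at hlt
  | coe d =>
    simp only [tropMonomial_coe, EReal.coe_lt_coe_iff, EReal.coe_nonneg] at h hlt
    funext i
    have hmul : ε * |(K i : ℝ)| < ε * 1 :=
      (mul_abs_le_of_nonneg_on_closedBall hε.le h i).trans_lt (by rwa [mul_one])
    have habs : |(K i : ℝ)| < 1 := lt_of_mul_lt_mul_left hmul hε.le
    exact Int.abs_lt_one_iff.1 (by exact_mod_cast habs)

theorem exists_pos_forall_eq_neg_of_add_lt (hV : V ∈ 𝓝 x)
    (hsum : ∀ y ∈ V, 0 ≤ tropLaurent c y + tropLaurent c' y) :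
    ∃ ε : ℝ, 0 < ε ∧ ∀ I J : ι → ℤ,
      tropMonomial I (c I) x + tropMonomial J (c' J) x < ε → J = -I := by
  obtain ⟨ε, hε, hball⟩ := nhds_basis_closedBall.mem_iff.1 hV
  refine ⟨ε, hε, fun I J hlt => (neg_eq_of_add_eq_zero_right ?_).symm⟩
  rw [tropMonomial_add_tropMonomial] at hlt
  refine eq_zero_of_tropMonomial_nonneg_of_lt hε (fun y hy => ?_) hlt
  rw [← tropMonomial_add_tropMonomial]
  exact (hsum y (hball hy)).trans
    (add_le_add (tropLaurent_le_tropMonomial c I y) (tropLaurent_le_tropMonomial c' J y))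

theorem exists_dominant_tropMonomial_at (hV : V ∈ 𝓝 x)
    (hsum : ∀ y ∈ V, tropLaurent c y + tropLaurent c' y = 0) :
    ∃ I : ι → ℤ, tropLaurent c x = tropMonomial I (c I) x ∧
      tropLaurent c' x = tropMonomial (-I) (c' (-I)) x ∧
      ∀ L, tropLaurent c x = tropMonomial L (c L) x → L = I := by
  obtain ⟨ε, hε, hcancel⟩ := exists_pos_forall_eq_neg_of_add_lt hV fun y hy => (hsum y hy).ge
  obtain ⟨r, hf, hg⟩ := exists_coe_of_ereal_add_eq_zero (hsum x (mem_of_mem_nhds hV))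
  have hf_lt : tropLaurent c x < ((r + ε / 2 : ℝ) : EReal) := by
    rw [hf]
    exact EReal.coe_lt_coe (by linarith)
  have hg_lt : tropLaurent c' x < ((-r + ε / 2 : ℝ) : EReal) := by
    rw [hg]
    exact EReal.coe_lt_coe (by linarith)
  have hneg {I J : ι → ℤ} (hI : tropMonomial I (c I) x < ((r + ε / 2 : ℝ) : EReal))
      (hJ : tropMonomial J (c' J) x < ((-r + ε / 2 : ℝ) : EReal)) : J = -I := by
    refine hcancel I J ((EReal.add_lt_add hI hJ).trans_eq ?_)
    rw [← EReal.coe_add]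
    congr 1
    ring
  obtain ⟨I, hI⟩ := iInf_lt_iff.1 hf_lt
  obtain ⟨J, hJ⟩ := iInf_lt_iff.1 hg_lt
  obtain rfl := hneg hI hJ
  have hI_unique (L : ι → ℤ) (hL : tropMonomial L (c L) x < ((r + ε / 2 : ℝ) : EReal)) : L = I :=
    neg_injective (hneg hL hJ).symm
  exact ⟨I, iInf_eq_of_forall_lt_imp_eq hI hI_unique,
    iInf_eq_of_forall_lt_imp_eq hJ fun _ hJ' => hneg hI hJ',
    fun L hL => hI_unique L (hL ▸ hf_lt)⟩

theorem tropLaurent_eq_tropMonomial_of_eq_at {y : ι → ℝ} {I : ι → ℤ}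
    (hf : tropLaurent c x = tropMonomial I (c I) x)
    (hg : tropLaurent c' x = tropMonomial (-I) (c' (-I)) x)
    (hx : tropLaurent c x + tropLaurent c' x = 0) (hy : tropLaurent c y + tropLaurent c' y = 0) :
    tropLaurent c y = tropMonomial I (c I) y := by
  refine ereal_eq_of_le_of_le_of_add_eq_zero (tropLaurent_le_tropMonomial c I y)
    (tropLaurent_le_tropMonomial c' (-I) y) hy ?_
  rwa [tropMonomial_add_tropMonomial_neg, ← tropMonomial_add_tropMonomial_neg I _ _ x, ← hf, ← hg]

theorem stmt4_general (hV : (interior V).Nonempty)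
    (hsum : ∀ x ∈ V, tropLaurent c x + tropLaurent c' x = 0) :
    ∃! I₀ : ι → ℤ, c I₀ ≠ ⊤ ∧ ∀ x ∈ V, tropLaurent c x = tropMonomial I₀ (c I₀) x := by
  obtain ⟨x, hx_int⟩ := hV
  have hx : x ∈ V := interior_subset hx_int
  obtain ⟨I, hf, hg, hunique⟩ :=
    exists_dominant_tropMonomial_at (mem_interior_iff_mem_nhds.1 hx_int) hsum
  have hfinite : c I ≠ ⊤ := fun htop => by
    obtain ⟨r, hr, -⟩ := exists_coe_of_ereal_add_eq_zero (hsum x hx)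
    rw [hr, htop, tropMonomial_top] at hf
    exact EReal.coe_ne_top r hf
  have heq (y) (hy : y ∈ V) : tropLaurent c y = tropMonomial I (c I) y :=
    tropLaurent_eq_tropMonomial_of_eq_at hf hg (hsum x hx) (hsum y hy)
  exact ⟨I, ⟨hfinite, heq⟩, fun L hL => hunique L (hL.2 x hx)⟩

end TropicalLaurentSeries

/-- Uniqueness of the dominant affine term: if `f(x) = ⨅_I (c(I) + ⟨I,x⟩)` and
`g(x) = ⨅_I (c'(I) + ⟨I,x⟩)` are infima of affine functions with integral slopes,
satisfying the coercivity coming from convergent Laurent series, and `f + g = 0` on a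
nonempty open connected set `V`, then there is a unique `I₀` with `c(I₀)` finite such that
`f(x) = c(I₀) + ⟨I₀, x⟩` for all `x ∈ V`. -/
theorem stmt4 (n : ℕ) (hn : 1 ≤ n) (V : Set (Fin n → ℝ)) (hV : IsOpen V)
    (hVconn : IsConnected V)
    (c c' : (Fin n → ℤ) → EReal)
    (hc : ∃ I, c I ≠ ⊤) (hc' : ∃ I, c' I ≠ ⊤)
    (hcoer : ∀ x ∈ V, Tendsto
      (fun I : Fin n → ℤ => c I + ((∑ i, (I i : ℝ) * x i : ℝ) : EReal))
      cofinite (nhds ⊤))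
    (hcoer' : ∀ x ∈ V, Tendsto
      (fun I : Fin n → ℤ => c' I + ((∑ i, (I i : ℝ) * x i : ℝ) : EReal))
      cofinite (nhds ⊤))
    (hsum : ∀ x ∈ V,
      (⨅ I : Fin n → ℤ, c I + ((∑ i, (I i : ℝ) * x i : ℝ) : EReal)) +
      (⨅ I : Fin n → ℤ, c' I + ((∑ i, (I i : ℝ) * x i : ℝ) : EReal)) = 0) :
    ∃! I₀ : Fin n → ℤ, c I₀ ≠ ⊤ ∧ ∀ x ∈ V,
      (⨅ I : Fin n → ℤ, c I + ((∑ i, (I i : ℝ) * x i : ℝ) : EReal)) =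
        c I₀ + ((∑ i, (I₀ i : ℝ) * x i : ℝ) : EReal) :=
  stmt4_general (hV.interior_eq.symm ▸ hVconn.nonempty) hsum
end
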